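/- Let G be a group, H ≤ G of index 2, χ : G → {±1} the character with kernel H, and M a G-module that is a vector space over a field of characteristic ≠ 2. Then restriction induces an isomorphism H¹(G, M ⊗ χ) ≅ H¹(H, M)⁻, the −1-eigenspace for the conjugation action of G/H on H¹(H, M). -/

import Mathlib

open scoped Classical

section GroupCohomologySetup

variable {k : Type*} [CommRing k] {H : Type*} [Group H]
  {M : Type*} [AddCommGroup M] [Module k M]

/-- The `k`-module of 1-cocycles of a representation. -/
def Z1 (ρ : Representation k H M) : Submodule k (H → M) where
  carrier := {φ | ∀ g h : H, φ (g * h) = φ g + ρ g (φ h)}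
  add_mem' := by
    intro φ ψ hφ hψ g h
    simp only [Pi.add_apply, hφ g h, hψ g h, map_add]
    abel
  zero_mem' := by intro g h; simp
  smul_mem' := by
    intro a φ hφ g h
    simp only [Pi.smul_apply, hφ g h, map_smul, smul_add]

/-- The coboundary map `M → (H → M)`, `m ↦ (g ↦ ρ(g)m − m)`. -/
def dZero (ρ : Representation k H M) : M →ₗ[k] (H → M) where
  toFun m := fun g => ρ g m - m
  map_add' x y := by funext g; simp only [map_add, Pi.add_apply]; abel
  map_smul' a x := by funext g; simp [map_smul, smul_sub]

/-- 1-coboundaries, as a submodule of the 1-cocycles. -/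
def B1 (ρ : Representation k H M) : Submodule k (Z1 ρ) :=
  (LinearMap.range (dZero ρ)).comap (Z1 ρ).subtype

/-- First group cohomology `H¹ = Z¹/B¹`. -/
abbrev H1 (ρ : Representation k H M) := Z1 ρ ⧸ B1 ρ

end GroupCohomologySetup

section Functoriality

variable {k : Type*} [CommRing k] {G K : Type*} [Group G] [Group K]
  {M N : Type*} [AddCommGroup M] [Module k M] [AddCommGroup N] [Module k N]

lemma mk_eq_mk_iff_exists_dZero (ρ : Representation k G M) (φ ψ : Z1 ρ) :
    (Submodule.Quotient.mk φ : H1 ρ) = Submodule.Quotient.mk ψ ↔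
      ∃ m : M, ∀ g, ρ g m - m = (φ : G → M) g - (ψ : G → M) g := by
  rw [Submodule.Quotient.eq]
  constructor
  · rintro ⟨m, hm⟩
    exact ⟨m, fun g => congrFun hm g⟩
  · rintro ⟨m, hm⟩
    exact ⟨m, funext hm⟩

/-- A cocycle differs from its conjugate by `s` by the coboundary of its value at `s`. -/
lemma Z1.conj_apply {ρ : Representation k G M} (φ : Z1 ρ) (s g : G) :
    ρ s ((φ : G → M) (s⁻¹ * g * s)) =
      (φ : G → M) g + (ρ g ((φ : G → M) s) - (φ : G → M) s) := by
  have h₁ := φ.2 s (s⁻¹ * g * s)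
  have h₂ := φ.2 g s
  rw [show s * (s⁻¹ * g * s) = g * s by group, h₂] at h₁
  rw [← add_sub_assoc, h₁]
  abel

/-- The map on cocycles induced by a group homomorphism and a compatible linear map. -/
def Z1.map (ρ : Representation k G M) (σ : Representation k K N) (f : K →* G) (τ : M →ₗ[k] N)
    (hτ : ∀ x m, τ (ρ (f x) m) = σ x (τ m)) : Z1 ρ →ₗ[k] Z1 σ where
  toFun φ := ⟨fun x => τ ((φ : G → M) (f x)), fun x y => by
    simp only [map_mul, φ.2 (f x) (f y), map_add, hτ]⟩
  map_add' φ ψ := Subtype.ext <| funext fun x => map_add τ _ _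
  map_smul' a φ := Subtype.ext <| funext fun x => map_smul τ _ _

/-- The map on first cohomology induced by a group homomorphism and a compatible linear map. -/
def H1.map (ρ : Representation k G M) (σ : Representation k K N) (f : K →* G) (τ : M →ₗ[k] N)
    (hτ : ∀ x m, τ (ρ (f x) m) = σ x (τ m)) : H1 ρ →ₗ[k] H1 σ :=
  (B1 ρ).mapQ (B1 σ) (Z1.map ρ σ f τ hτ) <| by
    rintro φ ⟨m, hm⟩
    refine ⟨τ m, funext fun x => ?_⟩
    have h : ρ (f x) m - m = (φ : G → M) (f x) := congrFun hm (f x)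
    change σ x (τ m) - τ m = τ ((φ : G → M) (f x))
    rw [← h, map_sub, hτ]

lemma H1.map_mk_eq (ρ : Representation k G M) (σ : Representation k K N) (f : K →* G)
    (τ : M →ₗ[k] N) (hτ : ∀ x m, τ (ρ (f x) m) = σ x (τ m)) (φ : Z1 ρ) (ψ : Z1 σ)
    (h : ∀ x, (ψ : K → N) x = τ ((φ : G → M) (f x))) :
    H1.map ρ σ f τ hτ (Submodule.Quotient.mk φ) = Submodule.Quotient.mk ψ :=
  congrArg Submodule.Quotient.mk
    (Subtype.ext (funext fun x => (h x).symm) : Z1.map ρ σ f τ hτ φ = ψ)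

end Functoriality

section IndexTwo

variable {k : Type*} [CommRing k] {G : Type*} [Group G] {H : Subgroup G}
  {M : Type*} [AddCommGroup M] [Module k M]

/-- Conjugation `h ↦ c⁻¹ * h * c` on a subgroup stable under conjugation. -/
def Subgroup.conjInvHom (H : Subgroup G) (c : G) (hH : ∀ g ∈ H, c⁻¹ * g * c ∈ H) : H →* H where
  toFun h := ⟨c⁻¹ * h * c, hH h h.2⟩
  map_one' := Subtype.ext (by simp)
  map_mul' x y := Subtype.ext (by simp [mul_assoc])

/-- The corestriction of a cochain `E` with respect to the transversal `{1, c}`. -/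
noncomputable def corestrict (H : Subgroup G) (σ : Representation k G M) (c : G) (E : G → M)
    (g : G) : M :=
  if g ∈ H then E g + σ c (E (c⁻¹ * g * c)) else E (g * c) + σ c (E (c⁻¹ * g))

lemma corestrict_mem_Z1 (hH : H.index = 2) {c : G} (hc : c ∉ H) (σ : Representation k G M)
    {E : G → M} (hE : ∀ x ∈ H, ∀ y ∈ H, E (x * y) = E x + σ x (E y)) :
    corestrict H σ c E ∈ Z1 σ := by
  intro a b
  have mul_mem {x y : G} : x * y ∈ H ↔ (x ∈ H ↔ y ∈ H) := Subgroup.mul_mem_iff_of_index_two hH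
  have hci : c⁻¹ ∉ H := by simpa using hc
  have cocycle {x y z : G} (hx : x ∈ H) (hy : y ∈ H) (hz : z = x * y) :
      E z = E x + σ x (E y) := hz ▸ hE x hx y hy
  have act {x y z w : G} (h : x * y = z * w) (m : M) : σ x (σ y m) = σ z (σ w m) := by
    rw [← Module.End.mul_apply, ← Module.End.mul_apply, ← map_mul, ← map_mul, h]
  have act_mul (x y : G) (m : M) : σ (x * y) m = σ x (σ y m) := by
    rw [map_mul, Module.End.mul_apply]
  by_cases ha : a ∈ H <;> by_cases hb : b ∈ H
  · simp only [corestrict, mul_mem, ha, hb, if_true]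
    rw [cocycle ha hb rfl,
      cocycle (z := c⁻¹ * (a * b) * c) (x := c⁻¹ * a * c) (y := c⁻¹ * b * c)
        (by simp [mul_mem, ha, hc, hci]) (by simp [mul_mem, hb, hc, hci]) (by group),
      map_add, map_add, act (show c * (c⁻¹ * a * c) = a * c by group)]
    abel
  · simp only [corestrict, mul_mem, ha, hb, if_true, if_false, iff_false, not_true]
    rw [cocycle (x := a) (y := b * c) ha (by simp [mul_mem, hb, hc]) (by group),
      cocycle (z := c⁻¹ * (a * b)) (x := c⁻¹ * a * c) (y := c⁻¹ * b)
        (by simp [mul_mem, ha, hc, hci]) (by simp [mul_mem, hb, hci]) (by group),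
      map_add, map_add, act (show c * (c⁻¹ * a * c) = a * c by group)]
    abel
  · simp only [corestrict, mul_mem, ha, hb, if_true, if_false, iff_true]
    rw [cocycle (x := a * c) (y := c⁻¹ * b * c) (by simp [mul_mem, ha, hc])
        (by simp [mul_mem, hb, hc, hci]) (by group),
      cocycle (z := c⁻¹ * (a * b)) (x := c⁻¹ * a) (y := b) (by simp [mul_mem, ha, hci]) hb
        (by group),
      map_add, map_add, act (show c * (c⁻¹ * a) = a * 1 by group), act_mul]
    simp only [map_one, Module.End.one_apply]
    abel
  · simp only [corestrict, mul_mem, ha, hb, if_true, if_false]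
    rw [cocycle (z := a * b) (x := a * c) (y := c⁻¹ * b) (by simp [mul_mem, ha, hc])
        (by simp [mul_mem, hb, hci]) (by group),
      cocycle (z := c⁻¹ * (a * b) * c) (x := c⁻¹ * a) (y := b * c)
        (by simp [mul_mem, ha, hci]) (by simp [mul_mem, hb, hc]) (by group),
      map_add, map_add, act (show c * (c⁻¹ * a) = a * 1 by group), act_mul]
    simp only [map_one, Module.End.one_apply]
    abel

end IndexTwo

section Field

variable {k : Type*} [Field k] {G : Type*} [Group G] {H : Subgroup G}
  {M : Type*} [AddCommGroup M] [Module k M]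

/-- A cocycle vanishing on a subgroup of index two is a coboundary when `2` is invertible. -/
lemma Z1.exists_eq_of_vanishing (h2 : (2 : k) ≠ 0) (hH : H.index = 2) {c : G} (hc : c ∉ H)
    (σ : Representation k G M) (φ : Z1 σ) (hφ : ∀ g ∈ H, (φ : G → M) g = 0) :
    ∃ n : M, ∀ g, σ g n - n = (φ : G → M) g := by
  have mul_mem {x y : G} : x * y ∈ H ↔ (x ∈ H ↔ y ∈ H) := Subgroup.mul_mem_iff_of_index_two hH
  have hci : c⁻¹ ∉ H := by simpa using hc
  set v := (φ : G → M) c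
  have val_of_notMem {g : G} (hg : g ∉ H) : (φ : G → M) g = v := by
    have h := φ.2 c (c⁻¹ * g)
    rwa [mul_inv_cancel_left, hφ (c⁻¹ * g) (by simp [mul_mem, hg, hci]), map_zero,
      add_zero] at h
  have act_of_mem {g : G} (hg : g ∈ H) : σ g v = v := by
    have h := φ.2 g c
    rw [val_of_notMem (by simp [mul_mem, hg, hc]), hφ g hg, zero_add] at h
    exact h.symm
  have act_of_notMem {g : G} (hg : g ∉ H) : σ g v = -v := by
    have h := φ.2 g c
    rw [hφ (g * c) (by simp [mul_mem, hg, hc]), val_of_notMem hg] at h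
    exact (neg_eq_of_add_eq_zero_right h.symm).symm
  refine ⟨-((2 : k)⁻¹ • v), fun g => ?_⟩
  rw [map_neg, map_smul]
  by_cases hg : g ∈ H
  · rw [act_of_mem hg, hφ g hg, sub_self]
  · rw [act_of_notMem hg, val_of_notMem hg, smul_neg, neg_neg, sub_neg_eq_add, ← add_smul,
      ← two_mul, mul_inv_cancel₀ h2, one_smul]

end Field

/-- for `M` a vector space over a field of characteristic `≠ 2`,
`H ≤ G` of index 2 and `χ : G → {±1}` the quadratic character with kernel `H`,
restriction induces an isomorphism `H¹(G, M ⊗ χ) ≅ H¹(H, M)⁻`, the `−1`-eigenspace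
for the conjugation action of `G/H` on `H¹(H, M)`. Here `ρχ` is the twist of `ρ`
by `χ` (note `(M ⊗ χ)|_H = M|_H`). -/
theorem stmt_9 {k : Type*} [Field k] (h2 : (2 : k) ≠ 0)
    {G : Type*} [Group G] (H : Subgroup G) (hH : H.index = 2)
    (c : G) (hc : c ∉ H) (hnorm : ∀ g ∈ H, ∀ d : G, d * g * d⁻¹ ∈ H)
    {M : Type*} [AddCommGroup M] [Module k M]
    (ρ : Representation k G M)
    (ρχ : Representation k G M)
    (hρχ : ∀ (g : G) (m : M), ρχ g m = if g ∈ H then ρ g m else -(ρ g m)) :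
    ∃ ι : H1 (ρ.comp H.subtype) →ₗ[k] H1 (ρ.comp H.subtype),
      (∀ φ ψ : Z1 (ρ.comp H.subtype),
        (∀ h : H, (ψ : ↥H → M) h =
            ρ c ((φ : ↥H → M) ⟨c⁻¹ * ↑h * c, by simpa using hnorm ↑h h.2 c⁻¹⟩)) →
        ι (Submodule.Quotient.mk φ) = Submodule.Quotient.mk ψ) ∧
      (∀ x, ι (ι x) = x) ∧
      ∃ r : H1 ρχ →ₗ[k] H1 (ρ.comp H.subtype),
        (∀ (φ : Z1 ρχ) (ψ : Z1 (ρ.comp H.subtype)),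
          (∀ h : H, (ψ : ↥H → M) h = (φ : G → M) ↑h) →
          r (Submodule.Quotient.mk φ) = Submodule.Quotient.mk ψ) ∧
        Function.Injective r ∧
        LinearMap.range r = LinearMap.eqLocus ι (-LinearMap.id) := by
  have hconj : ∀ g ∈ H, c⁻¹ * g * c ∈ H := fun g hg => by simpa using hnorm g hg c⁻¹
  have hcc : c * c ∈ H := by rw [Subgroup.mul_mem_iff_of_index_two hH]
  have act_mul (x y : G) (m : M) : ρ (x * y) m = ρ x (ρ y m) := by
    rw [map_mul, Module.End.mul_apply]
  have hχ {g : G} (hg : g ∈ H) (m : M) : ρχ g m = ρ g m := by rw [hρχ, if_pos hg]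
  have hχc (m : M) : ρχ c m = -ρ c m := by rw [hρχ, if_neg hc]
  have hτ (x : H) (m : M) : ρ c ((ρ.comp H.subtype) (H.conjInvHom c hconj x) m) =
      (ρ.comp H.subtype) x (ρ c m) := by
    change ρ c (ρ (c⁻¹ * x * c) m) = ρ x (ρ c m)
    rw [← act_mul, ← act_mul]
    congr 2
    group
  have hres (x : H) (m : M) : LinearMap.id (R := k) (ρχ (H.subtype x) m) =
      (ρ.comp H.subtype) x (LinearMap.id (R := k) m) := hχ x.2 m
  let ι := H1.map (ρ.comp H.subtype) (ρ.comp H.subtype) (H.conjInvHom c hconj) (ρ c) hτ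
  let r := H1.map ρχ (ρ.comp H.subtype) H.subtype LinearMap.id hres
  refine ⟨ι, fun φ ψ h => H1.map_mk_eq _ _ _ _ hτ φ ψ h, ?_, r,
    fun φ ψ h => H1.map_mk_eq _ _ _ _ hres φ ψ h, ?_, ?_⟩
  · intro x
    obtain ⟨φ, rfl⟩ := Submodule.Quotient.mk_surjective _ x
    refine (mk_eq_mk_iff_exists_dZero _
      (Z1.map _ _ _ _ hτ (Z1.map _ _ _ _ hτ φ)) φ).2 ⟨(φ : H → M) ⟨c * c, hcc⟩, fun h => ?_⟩
    have key := Z1.conj_apply φ ⟨c * c, hcc⟩ h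
    rw [eq_sub_iff_add_eq', ← key]
    change ρ (c * c) _ = ρ c (ρ c ((φ : H → M) _))
    rw [act_mul]
    refine congrArg (fun y => ρ c (ρ c ((φ : H → M) y))) (Subtype.ext ?_)
    change (c * c)⁻¹ * (h : G) * (c * c) = c⁻¹ * (c⁻¹ * h * c) * c
    group
  · rw [← LinearMap.ker_eq_bot, LinearMap.ker_eq_bot']
    intro x hx
    obtain ⟨φ, rfl⟩ := Submodule.Quotient.mk_surjective _ x
    obtain ⟨m, hm⟩ := (mk_eq_mk_iff_exists_dZero _ (Z1.map _ _ _ _ hres φ) 0).1 hx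
    have hd : dZero ρχ m ∈ Z1 ρχ := fun g h => by
      change ρχ (g * h) m - m = ρχ g m - m + ρχ g (ρχ h m - m)
      rw [map_mul, Module.End.mul_apply, map_sub]
      abel
    obtain ⟨n, hn⟩ := Z1.exists_eq_of_vanishing h2 hH hc ρχ (φ - ⟨dZero ρχ m, hd⟩) fun g hg => by
      have h : ρ g m - m = (φ : G → M) g - 0 := hm ⟨g, hg⟩
      change (φ : G → M) g - (ρχ g m - m) = 0
      rw [hχ hg, h, sub_zero, sub_self]
    refine (mk_eq_mk_iff_exists_dZero _ φ 0).2 ⟨m + n, fun g => ?_⟩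
    have h : ρχ g n - n = (φ : G → M) g - (ρχ g m - m) := hn g
    change _ = (φ : G → M) g - 0
    rw [map_add, sub_zero, ← eq_sub_iff_add_eq.1 h]
    abel
  · apply le_antisymm
    · rintro _ ⟨x, rfl⟩
      obtain ⟨φ, rfl⟩ := Submodule.Quotient.mk_surjective _ x
      refine (mk_eq_mk_iff_exists_dZero _ (Z1.map _ _ _ _ hτ (Z1.map _ _ _ _ hres φ))
        (-Z1.map _ _ _ _ hres φ)).2 ⟨-(φ : G → M) c, fun h => ?_⟩
      have key := Z1.conj_apply φ c h
      rw [hχc, hχ h.2] at key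
      change ρ h (-(φ : G → M) c) - -(φ : G → M) c =
        ρ c ((φ : G → M) (c⁻¹ * h * c)) - -(φ : G → M) h
      rw [← neg_neg (ρ c _), key, map_neg]
      abel
    · intro x hx
      obtain ⟨φ, rfl⟩ := Submodule.Quotient.mk_surjective _ x
      obtain ⟨m, hm⟩ := (mk_eq_mk_iff_exists_dZero _ (Z1.map _ _ _ _ hτ φ) (-φ)).1 hx
      let E : G → M := fun g => if hg : g ∈ H then (φ : H → M) ⟨g, hg⟩ else 0
      have hE {g : G} (hg : g ∈ H) : E g = (φ : H → M) ⟨g, hg⟩ := dif_pos hg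
      have hcor := corestrict_mem_Z1 hH hc ρχ (E := E) fun x hx y hy => by
        rw [hE hx, hE hy, hE (H.mul_mem hx hy), hχ hx]
        exact φ.2 ⟨x, hx⟩ ⟨y, hy⟩
      refine ⟨Submodule.Quotient.mk ((2 : k)⁻¹ • ⟨_, hcor⟩), ?_⟩
      refine (mk_eq_mk_iff_exists_dZero _ (Z1.map _ _ _ _ hres _) φ).2
        ⟨-((2 : k)⁻¹ • m), fun h => ?_⟩
      have key : ρ h m - m = ρ c ((φ : H → M) ⟨c⁻¹ * h * c, hconj h h.2⟩) - -(φ : H → M) h := hm h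
      change ρ h (-((2 : k)⁻¹ • m)) - -((2 : k)⁻¹ • m) =
        (2 : k)⁻¹ • corestrict H ρχ c E h - (φ : H → M) h
      rw [corestrict, if_pos h.2, hE h.2, hE (hconj h h.2), hχc, eq_add_of_sub_eq key.symm,
        map_neg, map_smul]
      have half : (φ : H → M) h = (2 : k)⁻¹ • ((φ : H → M) h + (φ : H → M) h) := by
        rw [← two_smul k, smul_smul, inv_mul_cancel₀ h2, one_smul]
      rw [eq_sub_iff_add_eq]
      nth_rewrite 1 [half]
      simp only [smul_add, smul_sub, neg_add, neg_sub, neg_neg]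
      abel
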